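/- arXiv:2310.06348 — 2 statements merged into one kernel-verified Lean document; each statement's English description precedes it below -/
import Mathlib

section
/- Let h > 0 and β be real numbers, and let (a_n)_{n≥1} be a sequence of positive reals with a_n → ∞, a_n/√n → 0, and (log n)/a_n² → 0. For n large enough set m_n = ⌊h·n + β·a_n·√n⌋ (a nonnegative integer). Then lim_{n→∞} (1/a_n²) · log( e^{-h n} · (h n)^{m_n} / m_n! ) = −β²/(2h). -/
/-!
Stirling's formula turns the logarithm of the Poisson weight `e^{-μ} μ^m / m!` into
`-μ φ(m / μ) - log (2m) / 2 + O(1)` with `φ x = x log x + 1 - x`. Since `φ` vanishes to second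
order at `1`, with `φ x ∼ (x - 1)² / 2`, the leading term is `-(m - μ)² / (2μ)` as soon as
`m / μ → 1`; the other terms are negligible on a scale that dominates `log μ`. Rounding `m` to an
integer changes `m - μ` by at most `1`, which is negligible compared with `a √n → ∞`.
-/

open Filter Real

section

open Asymptotics InformationTheory Topology
open scoped Nat

lemma isEquivalent_klFun : klFun ~[𝓝 1] fun x => (x - 1) ^ 2 / 2 := by
  have hderiv : ∀ x ∈ Set.Ioi (0 : ℝ),
      HasDerivWithinAt (fun x => klFun x - (x - 1) ^ 2 / 2) (log x - (x - 1)) (Set.Ioi 0) x := by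
    intro x hx
    have hsq : HasDerivAt (fun x : ℝ => (x - 1) ^ 2 / 2) (x - 1) x := by
      simpa using (((hasDerivAt_id x).sub_const 1).pow 2).div_const 2
    exact ((hasDerivAt_klFun (ne_of_gt hx)).sub hsq).hasDerivWithinAt
  have hlog : (fun x => log x - (x - 1)) =o[𝓝[Set.Ioi 0] 1] fun x => (x - 1) ^ 1 := by
    simpa using (hasDerivAt_log one_ne_zero).isLittleO.mono nhdsWithin_le_nhds
  have htaylor := (convex_Ioi 0).isLittleO_pow_succ_real (Set.mem_Ioi.2 one_pos) hderiv hlog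
  rw [nhdsWithin_eq_nhds.2 (Ioi_mem_nhds one_pos)] at htaylor
  simpa [IsEquivalent, Pi.sub_def, klFun_one, div_eq_inv_mul, isLittleO_const_mul_right_iff]
    using htaylor

variable {ι : Type*} {l : Filter ι}

lemma tendsto_natFloor_sub_self_div {y d : ι → ℝ}
    (hy : ∀ᶠ i in l, 0 ≤ y i) (hd : Tendsto d l atTop) :
    Tendsto (fun i => (⌊y i⌋₊ - y i) / d i) l (𝓝 0) := by
  refine squeeze_zero_norm' ?_ (hd.const_div_atTop 1)
  filter_upwards [hy, hd.eventually_gt_atTop 0] with i hyi hdi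
  rw [norm_div, norm_of_nonneg hdi.le]
  gcongr
  exact Nat.abs_floor_sub_le hyi

/-- At `m = 0` this relies on `log 0 = 0` and `Stirling.stirlingSeq 0 = 0`. -/
lemma log_exp_neg_mul_pow_div_factorial {μ : ℝ} (hμ : 0 < μ) (m : ℕ) :
    log (exp (-μ) * μ ^ m / m !) =
      -(μ * klFun (m / μ)) - log (2 * m) / 2 - log (Stirling.stirlingSeq m) := by
  rw [Stirling.log_stirlingSeq_formula, log_div (by positivity) (by positivity),
    log_mul (by positivity) (by positivity), log_exp, log_pow, klFun_apply]
  rcases m.eq_zero_or_pos with rfl | hm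
  · simp
  · rw [log_div (by positivity) (by positivity), log_div (by positivity) (by positivity), log_exp]
    field_simp
    ring

lemma tendsto_div_nhds_one_of_tendsto_sq_sub_div {x μ v : ι → ℝ} {c : ℝ}
    (hμ : ∀ᶠ i in l, μ i ≠ 0) (hv : ∀ᶠ i in l, v i ≠ 0)
    (hvμ : Tendsto (fun i => v i / μ i) l (𝓝 0))
    (hx : Tendsto (fun i => (x i - μ i) ^ 2 / (v i * μ i)) l (𝓝 c)) :
    Tendsto (fun i => x i / μ i) l (𝓝 1) := by
  have hsq : Tendsto (fun i => (x i / μ i - 1) ^ 2) l (𝓝 0) := by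
    refine (mul_zero c ▸ hx.mul hvμ).congr' ?_
    filter_upwards [hμ, hv] with i hμi hvi
    field_simp
  rw [tendsto_iff_norm_sub_tendsto_zero]
  simpa [sqrt_sq_eq_abs] using hsq.sqrt

lemma tendsto_mul_klFun_div {x μ v : ι → ℝ} {c : ℝ}
    (hxμ : Tendsto (fun i => x i / μ i) l (𝓝 1))
    (hx : Tendsto (fun i => (x i - μ i) ^ 2 / (v i * μ i)) l (𝓝 c)) :
    Tendsto (fun i => μ i * klFun (x i / μ i) / v i) l (𝓝 (c / 2)) := by
  have hequiv : (fun i => klFun (x i / μ i) * (μ i / v i))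
      ~[l] fun i => (x i / μ i - 1) ^ 2 / 2 * (μ i / v i) :=
    (isEquivalent_klFun.comp_tendsto hxμ).mul .refl
  refine (hequiv.symm.tendsto_nhds ((hx.div_const 2).congr' ?_)).congr fun i => by ring
  filter_upwards [hxμ.eventually_ne one_ne_zero] with i hi
  have hμi : μ i ≠ 0 := (div_ne_zero_iff.1 hi).2
  field_simp

lemma tendsto_log_div_of_tendsto_div {x μ v : ι → ℝ} {r : ℝ} (hr : r ≠ 0)
    (hv : Tendsto v l atTop) (hlog : Tendsto (fun i => log (μ i) / v i) l (𝓝 0))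
    (hxμ : Tendsto (fun i => x i / μ i) l (𝓝 r)) :
    Tendsto (fun i => log (x i) / v i) l (𝓝 0) := by
  refine (add_zero (0 : ℝ) ▸ ((hxμ.log hr).div_atTop hv).add hlog).congr' ?_
  filter_upwards [hxμ.eventually_ne hr] with i hi
  rw [log_div (div_ne_zero_iff.1 hi).1 (div_ne_zero_iff.1 hi).2]
  ring

lemma tendsto_log_stirlingSeq :
    Tendsto (fun m => log (Stirling.stirlingSeq m)) atTop (𝓝 (log √π)) :=
  Stirling.tendsto_stirlingSeq_sqrt_pi.log (by positivity)

/-- `v` is the speed: `v → ∞` goes beyond the central-limit scale `m - μ ≍ √μ`, and `v / μ → 0`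
stays below the large-deviation scale `m - μ ≍ μ`. -/
theorem tendsto_log_poisson_div {m : ι → ℕ} {μ v : ι → ℝ} {c : ℝ}
    (hμ : Tendsto μ l atTop) (hv : Tendsto v l atTop)
    (hvμ : Tendsto (fun i => v i / μ i) l (𝓝 0))
    (hlog : Tendsto (fun i => log (μ i) / v i) l (𝓝 0))
    (hm : Tendsto (fun i => (m i - μ i) ^ 2 / (v i * μ i)) l (𝓝 c)) :
    Tendsto (fun i => log (exp (-μ i) * μ i ^ m i / (m i)!) / v i) l (𝓝 (-(c / 2))) := by
  have hμ0 := hμ.eventually_ne_atTop 0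
  have hratio := tendsto_div_nhds_one_of_tendsto_sq_sub_div hμ0 (hv.eventually_ne_atTop 0) hvμ hm
  have hm_top : Tendsto m l atTop := tendsto_natCast_atTop_iff.1 <|
    (hμ.atTop_mul_pos one_pos hratio).congr' (hμ0.mono fun i hi => mul_div_cancel₀ _ hi)
  have hkl := tendsto_mul_klFun_div hratio hm
  have hlog2m : Tendsto (fun i => log (2 * m i) / v i) l (𝓝 0) :=
    tendsto_log_div_of_tendsto_div (r := 2) two_ne_zero hv hlog <| by
      simpa [mul_div_assoc] using hratio.const_mul 2
  have hstirling : Tendsto (fun i => log (Stirling.stirlingSeq (m i)) / v i) l (𝓝 0) :=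
    (tendsto_log_stirlingSeq.comp hm_top).div_atTop hv
  have hsum := (hkl.neg.sub (hlog2m.div_const 2)).sub hstirling
  rw [zero_div, sub_zero, sub_zero] at hsum
  refine hsum.congr' ?_
  filter_upwards [hμ.eventually_gt_atTop 0] with i hi
  rw [log_exp_neg_mul_pow_div_factorial hi]
  ring

lemma eventually_nonneg_mul_add_mul_sqrt {h : ℝ} (hh : 0 < h) (β : ℝ) {u a : ι → ℝ}
    (hu : ∀ᶠ i in l, 0 ≤ u i) (hau : Tendsto (fun i => a i / √(u i)) l (𝓝 0)) :
    ∀ᶠ i in l, 0 ≤ h * u i + β * a i * √(u i) := by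
  have hfactor : Tendsto (fun i => h + β * (a i / √(u i))) l (𝓝 h) := by
    simpa using (hau.const_mul β).const_add h
  filter_upwards [hfactor.eventually_const_lt hh, hu] with i hpos hui
  calc 0 ≤ u i * (h + β * (a i / √(u i))) := by positivity
    _ = h * u i + β * a i * (u i / √(u i)) := by ring
    _ = h * u i + β * a i * √(u i) := by rw [div_sqrt]

lemma tendsto_natFloor_sub_sq_div {h : ℝ} (hh : 0 < h) (β : ℝ) {u a : ι → ℝ}
    (hu : Tendsto u l atTop) (ha : Tendsto a l atTop)
    (hau : Tendsto (fun i => a i / √(u i)) l (𝓝 0)) :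
    Tendsto (fun i => ((⌊h * u i + β * a i * √(u i)⌋₊ : ℝ) - h * u i) ^ 2 / (a i ^ 2 * (h * u i)))
      l (𝓝 (β ^ 2 / h)) := by
  have hu0 := hu.eventually_gt_atTop 0
  have hscale : Tendsto (fun i => a i * √(u i)) l atTop :=
    ha.atTop_mul_atTop₀ (tendsto_sqrt_atTop.comp hu)
  have hfloor := tendsto_natFloor_sub_self_div
    (eventually_nonneg_mul_add_mul_sqrt hh β (hu.eventually_ge_atTop 0) hau) hscale
  have hlim := ((hfloor.add_const β).pow 2).div_const h
  rw [zero_add] at hlim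
  refine hlim.congr' ?_
  filter_upwards [hu0, hscale.eventually_ne_atTop 0] with i hui hi
  rw [div_add' _ _ _ hi, div_pow, div_div, mul_pow, sq_sqrt hui.le]
  ring

theorem poisson_local_mdp_general {h : ℝ} (hh : 0 < h) (β : ℝ) {u a : ι → ℝ}
    (hu : Tendsto u l atTop) (ha : Tendsto a l atTop)
    (hau : Tendsto (fun i => a i / √(u i)) l (𝓝 0))
    (hlog : Tendsto (fun i => log (u i) / a i ^ 2) l (𝓝 0)) :
    Tendsto (fun i => 1 / a i ^ 2 * log (exp (-(h * u i))
        * (h * u i) ^ ⌊h * u i + β * a i * √(u i)⌋₊ / (⌊h * u i + β * a i * √(u i)⌋₊)!))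
      l (𝓝 (-(β ^ 2 / (2 * h)))) := by
  have hspeed : Tendsto (fun i => a i ^ 2) l atTop :=
    (tendsto_pow_atTop two_ne_zero).comp ha
  have hspeed_div : Tendsto (fun i => a i ^ 2 / (h * u i)) l (𝓝 0) := by
    have hsq := (hau.pow 2).div_const h
    rw [zero_pow two_ne_zero, zero_div] at hsq
    refine hsq.congr' ?_
    filter_upwards [hu.eventually_ge_atTop 0] with i hui
    rw [div_pow, sq_sqrt hui, div_div, mul_comm h]
  have hlog_mean : Tendsto (fun i => log (h * u i) / a i ^ 2) l (𝓝 0) :=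
    tendsto_log_div_of_tendsto_div hh.ne' hspeed hlog <|
      tendsto_const_nhds.congr' <|
        (hu.eventually_ne_atTop 0).mono fun i hi => (mul_div_cancel_right₀ h hi).symm
  have hlim := tendsto_log_poisson_div (hu.const_mul_atTop hh) hspeed hspeed_div hlog_mean
    (tendsto_natFloor_sub_sq_div hh β hu ha hau)
  simpa only [one_div_mul_eq_div, div_div, mul_comm h 2] using hlim

end

/-- Local moderate-deviation estimate for Poisson probabilities: with
`m_n = ⌊h·n + β·a_n·√n⌋`,
`lim (1/a_n²)·log(e^{-h n} (h n)^{m_n} / m_n!) = −β²/(2h)`. -/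
theorem poisson_local_mdp (h β : ℝ) (hh : 0 < h) (a : ℕ → ℝ)
    (ha_pos : ∀ n, 0 < a n)
    (ha_top : Tendsto a atTop atTop)
    (ha_sqrt : Tendsto (fun n : ℕ => a n / Real.sqrt n) atTop (nhds 0))
    (ha_log : Tendsto (fun n : ℕ => Real.log n / (a n) ^ 2) atTop (nhds 0)) :
    Tendsto (fun n : ℕ =>
        (1 / (a n) ^ 2) * Real.log (Real.exp (-(h * n))
          * (h * n) ^ (⌊h * n + β * a n * Real.sqrt n⌋₊)
          / (Nat.factorial ⌊h * n + β * a n * Real.sqrt n⌋₊)))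
      atTop (nhds (-(β ^ 2 / (2 * h)))) :=
  poisson_local_mdp_general hh β tendsto_natCast_atTop_atTop ha_top ha_sqrt ha_log
end

section
/- Let h > 0 and K > 0 be real numbers, and let (a_n)_{n≥1} be a sequence of positive reals with a_n → ∞ and a_n/√n → 0. Then limsup_{n→∞} (1/a_n²) · log( Σ_{m ∈ ℕ, |m − h n| > K·a_n·√n} e^{-h n} (h n)^m / m! ) ≤ −K²/(2h). -/
open Filter Real

/-!
For a Poisson variable `Y` of rate `r` and a deviation `b * √r` with `b ≤ √r`, the Chernoff bound
with tilt `b / √r` gives `P(|Y - r| > b * √r) ≤ 2 * exp (-(b² / 2) * (1 - 2 * b / √r))`. Conversely,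
Stirling's formula bounds each atom `P(Y = m)`, `m ≥ r`, below by
`exp (-(m - r)² / (2 * r)) / (e * √m)`, and the roughly `√r` atoms just above the threshold add up
to a tail probability of at least `exp (-(b + 2)² / 2) / (2 * e)`. When `b → ∞` and `b / √r → 0`
both exponents are asymptotic to `-b² / 2`, so the limit superior is a limit. The lower bound is
needed even for the upper estimate, because the real-valued `limsup` of a sequence tending to `-∞`
is the junk value `0`.
-/

open MeasureTheory ProbabilityTheory
open scoped NNReal Nat Topology

theorem log_le_sub_inv_div_two {x : ℝ} (hx : 1 ≤ x) : log x ≤ (x - x⁻¹) / 2 := by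
  rw [← sinh_log (by positivity)]
  exact self_le_sinh_iff.2 (log_nonneg hx)

theorem exp_neg_sub_one_add_le {x : ℝ} (hx : 0 ≤ x) : exp (-x) - 1 + x ≤ exp x - 1 - x := by
  have := self_le_sinh_iff.2 hx
  rw [sinh_eq] at this
  linarith

theorem exp_sub_one_sub_le {x : ℝ} (hx₀ : 0 ≤ x) (hx₁ : x ≤ 1) :
    exp x - 1 - x ≤ x ^ 2 / 2 + x ^ 3 := by
  have taylor := exp_bound' hx₀ hx₁ (n := 3) three_pos
  norm_num [Finset.sum_range_succ, Nat.factorial] at taylor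
  linarith [pow_nonneg hx₀ 3]

theorem factorial_le_stirling {n : ℕ} (hn : n ≠ 0) :
    (n ! : ℝ) ≤ exp 1 * √n * (n / exp 1) ^ n := by
  obtain ⟨k, rfl⟩ := Nat.exists_eq_succ_of_ne_zero hn
  have hle : Stirling.stirlingSeq (k + 1) ≤ exp 1 / √2 := by
    simpa only [Function.comp_apply, Nat.succ_eq_add_one, zero_add, Stirling.stirlingSeq_one]
      using Stirling.stirlingSeq'_antitone k.zero_le
  rw [Stirling.stirlingSeq, div_le_iff₀ (by positivity), sqrt_mul zero_le_two] at hle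
  refine hle.trans_eq ?_
  field_simp

theorem mul_le_measureReal_lt {μ : Measure ℕ} [IsFiniteMeasure μ] {x y c : ℝ} (hx : 0 ≤ x)
    (hc : 0 ≤ c) (hμ : ∀ m : ℕ, x < m → m ≤ y → c ≤ μ.real {m}) :
    (y - x - 1) * c ≤ μ.real {m : ℕ | x < m} := by
  have hlt {m : ℕ} (hm : m ∈ Finset.Ioc ⌊x⌋₊ ⌊y⌋₊) : x < m :=
    (Nat.floor_lt hx).1 (Finset.mem_Ioc.1 hm).1
  have hle {m : ℕ} (hm : m ∈ Finset.Ioc ⌊x⌋₊ ⌊y⌋₊) : m ≤ y := by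
    obtain ⟨hxm, hmy⟩ := Finset.mem_Ioc.1 hm
    exact (Nat.le_floor_iff' (Nat.ne_zero_of_lt hxm)).1 hmy
  have hcard : y - x - 1 ≤ (⌊y⌋₊ - ⌊x⌋₊ : ℕ) := by
    have hsub : (⌊y⌋₊ : ℝ) ≤ (⌊y⌋₊ - ⌊x⌋₊ : ℕ) + ⌊x⌋₊ := by
      exact_mod_cast le_tsub_add
    linarith [Nat.lt_floor_add_one y, Nat.floor_le hx]
  calc (y - x - 1) * c
      ≤ (⌊y⌋₊ - ⌊x⌋₊ : ℕ) * c := by gcongr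
    _ = ∑ _m ∈ Finset.Ioc ⌊x⌋₊ ⌊y⌋₊, c := by simp
    _ ≤ ∑ m ∈ Finset.Ioc ⌊x⌋₊ ⌊y⌋₊, μ.real {m} :=
        Finset.sum_le_sum fun m hm => hμ m (hlt hm) (hle hm)
    _ = μ.real (Finset.Ioc ⌊x⌋₊ ⌊y⌋₊) := sum_measureReal_singleton _
    _ ≤ μ.real {m : ℕ | x < m} := measureReal_mono fun m hm => hlt hm

section PoissonMeasure

theorem poissonMeasure_real_eq_tsum (r : ℝ≥0) (p : ℕ → Prop) [DecidablePred p] :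
    Po(r).real {m | p m} = ∑' m : ℕ, if p m then exp (-r) * r ^ m / m ! else 0 := by
  rw [← integral_indicator_one .of_discrete, integral_poissonMeasure]
  simp only [Set.indicator_apply, Set.mem_ofPred_eq, Pi.one_apply, smul_eq_mul, mul_ite, mul_one,
    mul_zero]

theorem hasSum_poissonMeasure_exp_mul (r : ℝ≥0) (θ : ℝ) :
    HasSum (fun m : ℕ => exp (-r) * r ^ m / m ! * exp (θ * m)) (exp (r * (exp θ - 1))) := by
  convert! (NormedSpace.expSeries_div_hasSum_exp (r * exp θ)).mul_left (exp (-r)) using 1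
  · ext m
    rw [mul_pow, ← exp_nat_mul, mul_comm θ]
    ring
  · rw [← exp_eq_exp_ℝ, ← exp_add]
    ring_nf

theorem integrable_exp_mul_poissonMeasure (r : ℝ≥0) (θ : ℝ) :
    Integrable (fun m : ℕ => exp (θ * m)) Po(r) := by
  simpa only [integrable_poissonMeasure_iff, norm_eq_abs, abs_exp]
    using (hasSum_poissonMeasure_exp_mul r θ).summable

theorem mgf_poissonMeasure (r : ℝ≥0) (θ : ℝ) :
    mgf (fun m : ℕ => (m : ℝ)) Po(r) θ = exp (r * (exp θ - 1)) := by
  rw [mgf, integral_poissonMeasure]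
  exact (hasSum_poissonMeasure_exp_mul r θ).tsum_eq

theorem poissonMeasure_real_lt_abs_sub_le_exp (r : ℝ≥0) (t : ℝ) {θ : ℝ} (hθ : 0 ≤ θ) :
    Po(r).real {m : ℕ | t < |(m : ℝ) - r|} ≤ 2 * exp (r * (exp θ - 1 - θ) - θ * t) := by
  have upper_tail : Po(r).real {m : ℕ | r + t ≤ m} ≤ exp (r * (exp θ - 1 - θ) - θ * t) := by
    refine (measure_ge_le_exp_mul_mgf _ hθ (integrable_exp_mul_poissonMeasure r θ)).trans_eq ?_
    rw [mgf_poissonMeasure, ← exp_add]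
    ring_nf
  have lower_tail : Po(r).real {m : ℕ | m ≤ r - t} ≤ exp (r * (exp θ - 1 - θ) - θ * t) :=
    calc Po(r).real {m : ℕ | m ≤ r - t}
        ≤ exp (- -θ * (r - t)) * mgf (fun m : ℕ => (m : ℝ)) Po(r) (-θ) :=
          measure_le_le_exp_mul_mgf _ (neg_nonpos.2 hθ) (integrable_exp_mul_poissonMeasure r (-θ))
      _ = exp (r * (exp (-θ) - 1 + θ) - θ * t) := by
          rw [mgf_poissonMeasure, ← exp_add]
          ring_nf
      _ ≤ exp (r * (exp θ - 1 - θ) - θ * t) := by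
          gcongr exp (r * ?_ - θ * t)
          exact exp_neg_sub_one_add_le hθ
  have hsub : {m : ℕ | t < |(m : ℝ) - r|} ⊆ {m : ℕ | r + t ≤ m} ∪ {m : ℕ | m ≤ r - t} := by
    intro m hm
    rcases lt_abs.1 (show t < |(m : ℝ) - r| from hm) with h | h
    · exact Or.inl (show (r : ℝ) + t ≤ m by linarith)
    · exact Or.inr (show (m : ℝ) ≤ r - t by linarith)
  linarith [measureReal_mono (μ := Po(r)) hsub,
    measureReal_union_le (μ := Po(r)) {m : ℕ | r + t ≤ m} {m : ℕ | m ≤ r - t}]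

variable {r : ℝ≥0} {b : ℝ}

theorem poissonMeasure_real_mul_sqrt_lt_abs_sub_le (hr : 0 < r) (hb₀ : 0 ≤ b) (hb : b ≤ √r) :
    Po(r).real {m : ℕ | b * √r < |(m : ℝ) - r|} ≤ 2 * exp (-(b ^ 2 * (1 / 2 - b / √r))) := by
  have hq : 0 < √(r : ℝ) := sqrt_pos.2 hr
  have hrq : (r : ℝ) = √r ^ 2 := (sq_sqrt r.coe_nonneg).symm
  refine (poissonMeasure_real_lt_abs_sub_le_exp r (b * √r) (θ := b / √r) (by positivity)).trans ?_
  gcongr 2 * exp ?_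
  calc r * (exp (b / √r) - 1 - b / √r) - b / √r * (b * √r)
      ≤ r * ((b / √r) ^ 2 / 2 + (b / √r) ^ 3) - b / √r * (b * √r) := by
        gcongr
        exact exp_sub_one_sub_le (by positivity) ((div_le_one hq).2 hb)
    _ = √r ^ 2 * ((b / √r) ^ 2 / 2 + (b / √r) ^ 3) - b / √r * (b * √r) := by rw [← hrq]
    _ = -(b ^ 2 * (1 / 2 - b / √r)) := by
        field_simp
        ring

theorem exp_div_le_poissonMeasure_real_singleton (hr : 0 < r) {m : ℕ} (hm : r ≤ m) :
    exp (-((m - r) ^ 2 / (2 * r))) / (exp 1 * √m) ≤ Po(r).real {m} := by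
  have hr' : (0 : ℝ) < r := hr
  have hrm : (r : ℝ) ≤ m := by exact_mod_cast hm
  have hm₀ : (0 : ℝ) < m := hr'.trans_le hrm
  have hrate : m * (log (m / r) - 1) ≤ (m - r) ^ 2 / (2 * r) - r :=
    calc m * (log (m / r) - 1) ≤ m * ((m / r - (m / r : ℝ)⁻¹) / 2 - 1) := by
          gcongr
          exact log_le_sub_inv_div_two ((one_le_div hr').2 hrm)
      _ = (m - r) ^ 2 / (2 * r) - r := by
          field_simp
          ring
  have hpow : exp (-((m - r) ^ 2 / (2 * r))) * (m / exp 1) ^ m ≤ exp (-r) * r ^ m :=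
    calc exp (-((m - r) ^ 2 / (2 * r))) * (m / exp 1) ^ m
        = exp (-((m - r) ^ 2 / (2 * r)) + m * (log (m / r) - 1)) * r ^ m := by
          rw [exp_add, exp_nat_mul, exp_sub, exp_log (by positivity), mul_assoc, ← mul_pow]
          field_simp
      _ ≤ exp (-r) * r ^ m := by
          gcongr
          linarith
  calc exp (-((m - r) ^ 2 / (2 * r))) / (exp 1 * √m)
      = exp (-((m - r) ^ 2 / (2 * r))) * (m / exp 1) ^ m /
          (exp 1 * √m * (m / exp 1) ^ m) := by field_simp
    _ ≤ exp (-r) * r ^ m / m ! := by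
        gcongr
        exact factorial_le_stirling (Nat.cast_pos.1 hm₀).ne'
    _ = Po(r).real {m} := (poissonMeasure_real_singleton r m).symm

theorem exp_div_le_poissonMeasure_real_mul_sqrt_lt_abs_sub (hr : 1 ≤ r) (hb₀ : 0 ≤ b)
    (hb : b ≤ √r) :
    exp (-((b + 2) ^ 2 / 2)) / (2 * exp 1) ≤ Po(r).real {m : ℕ | b * √r < |(m : ℝ) - r|} := by
  have hq : 1 ≤ √(r : ℝ) := one_le_sqrt.2 hr
  have hrq : (r : ℝ) = √r ^ 2 := (sq_sqrt r.coe_nonneg).symm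
  have hr₀ : (0 : ℝ) < r := one_pos.trans_le hr
  set c := exp (-((b + 2) ^ 2 / 2)) / (exp 1 * (2 * √r)) with hc
  have atom (m : ℕ) (hm : r + b * √r < m) (hm' : m ≤ r + (b + 2) * √r) : c ≤ Po(r).real {m} := by
    have hrm : (r : ℝ) ≤ m := by nlinarith
    have hexp : (m - r : ℝ) ^ 2 / (2 * r) ≤ (b + 2) ^ 2 / 2 := by
      calc (m - r : ℝ) ^ 2 / (2 * r) ≤ ((b + 2) * √r) ^ 2 / (2 * r) := by
            gcongr
            linarith
        _ = (b + 2) ^ 2 / 2 := by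
            rw [mul_pow, ← hrq]
            field_simp
    have hsqrt : √(m : ℝ) ≤ 2 * √r := sqrt_le_iff.2 ⟨by positivity, by nlinarith⟩
    refine le_trans ?_ (exp_div_le_poissonMeasure_real_singleton hr₀ (by exact_mod_cast hrm))
    have : 0 < √(m : ℝ) := sqrt_pos.2 (hr₀.trans_le hrm)
    rw [hc]
    gcongr
  calc exp (-((b + 2) ^ 2 / 2)) / (2 * exp 1)
      = √r * c := by
        rw [hc]
        field_simp
    _ ≤ (r + (b + 2) * √r - (r + b * √r) - 1) * c := by
        gcongr
        linarith
    _ ≤ Po(r).real {m : ℕ | r + b * √r < m} :=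
        mul_le_measureReal_lt (by positivity) (by positivity) atom
    _ ≤ Po(r).real {m : ℕ | b * √r < |(m : ℝ) - r|} :=
        measureReal_mono fun m (hm : r + b * √r < m) =>
          show b * √r < |(m : ℝ) - r| from (lt_sub_iff_add_lt'.2 hm).trans_le (le_abs_self _)

theorem inv_sq_mul_log_poissonMeasure_real_le (hr : 1 ≤ r) (hb₀ : 0 < b) (hb : b ≤ √r) :
    (b ^ 2)⁻¹ * log (Po(r).real {m : ℕ | b * √r < |(m : ℝ) - r|}) ≤
      log 2 * (b ^ 2)⁻¹ - 1 / 2 + b / √r := by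
  have hpos : 0 < Po(r).real {m : ℕ | b * √r < |(m : ℝ) - r|} :=
    (by positivity : 0 < exp (-((b + 2) ^ 2 / 2)) / (2 * exp 1)).trans_le
      (exp_div_le_poissonMeasure_real_mul_sqrt_lt_abs_sub hr hb₀.le hb)
  calc (b ^ 2)⁻¹ * log (Po(r).real {m : ℕ | b * √r < |(m : ℝ) - r|})
      ≤ (b ^ 2)⁻¹ * log (2 * exp (-(b ^ 2 * (1 / 2 - b / √r)))) := by
        gcongr
        exact poissonMeasure_real_mul_sqrt_lt_abs_sub_le (one_pos.trans_le hr) hb₀.le hb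
    _ = log 2 * (b ^ 2)⁻¹ - 1 / 2 + b / √r := by
        rw [log_mul two_ne_zero (exp_ne_zero _), log_exp]
        field_simp
        ring

theorem le_inv_sq_mul_log_poissonMeasure_real (hr : 1 ≤ r) (hb₀ : 0 < b) (hb : b ≤ √r) :
    -((1 + 2 * b⁻¹) ^ 2 / 2) - log (2 * exp 1) * (b ^ 2)⁻¹ ≤
      (b ^ 2)⁻¹ * log (Po(r).real {m : ℕ | b * √r < |(m : ℝ) - r|}) :=
  calc -((1 + 2 * b⁻¹) ^ 2 / 2) - log (2 * exp 1) * (b ^ 2)⁻¹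
      = (b ^ 2)⁻¹ * log (exp (-((b + 2) ^ 2 / 2)) / (2 * exp 1)) := by
        rw [log_div (exp_ne_zero _) (by positivity), log_exp]
        field_simp
    _ ≤ (b ^ 2)⁻¹ * log (Po(r).real {m : ℕ | b * √r < |(m : ℝ) - r|}) := by
        gcongr
        exact exp_div_le_poissonMeasure_real_mul_sqrt_lt_abs_sub hr hb₀.le hb

end PoissonMeasure

section ModerateDeviations

variable {ι : Type*} {l : Filter ι}

theorem tendsto_inv_sq_mul_log_poissonMeasure_real {r : ι → ℝ≥0} {b : ι → ℝ}
    (hr : ∀ᶠ i in l, 0 < r i) (hb : Tendsto b l atTop)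
    (hbr : Tendsto (fun i => b i / √(r i)) l (𝓝 0)) :
    Tendsto (fun i => (b i ^ 2)⁻¹ * log (Po(r i).real {m : ℕ | b i * √(r i) < |(m : ℝ) - r i|})) l
      (𝓝 (-(1 / 2))) := by
  have hinv : Tendsto (fun i => (b i)⁻¹) l (𝓝 0) := hb.inv_tendsto_atTop
  have hinv_sq : Tendsto (fun i => (b i ^ 2)⁻¹) l (𝓝 0) :=
    ((tendsto_pow_atTop two_ne_zero).comp hb).inv_tendsto_atTop
  have lower : Tendsto
      (fun i => -((1 + 2 * (b i)⁻¹) ^ 2 / 2) - log (2 * exp 1) * (b i ^ 2)⁻¹) l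
      (𝓝 (-(1 / 2))) := by
    simpa using
      ((((hinv.const_mul 2).const_add 1).pow 2).div_const 2).neg.sub (hinv_sq.const_mul _)
  have upper : Tendsto (fun i => log 2 * (b i ^ 2)⁻¹ - 1 / 2 + b i / √(r i)) l
      (𝓝 (-(1 / 2))) := by
    simpa using ((hinv_sq.const_mul (log 2)).sub_const (1 / 2)).add hbr
  have regime : ∀ᶠ i in l, 1 ≤ r i ∧ 0 < b i ∧ b i ≤ √(r i) := by
    filter_upwards [hr, hb.eventually_ge_atTop 1, hbr.eventually_le_const one_pos]
      with i hri hbi hbri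
    have hle : b i ≤ √(r i) := (div_le_one (sqrt_pos.2 hri)).1 hbri
    exact ⟨one_le_sqrt.1 (hbi.trans hle), one_pos.trans_le hbi, hle⟩
  refine tendsto_of_tendsto_of_tendsto_of_le_of_le' lower upper ?_ ?_
  · filter_upwards [regime] with i ⟨hri, hbi, hle⟩
    exact le_inv_sq_mul_log_poissonMeasure_real hri hbi hle
  · filter_upwards [regime] with i ⟨hri, hbi, hle⟩
    exact inv_sq_mul_log_poissonMeasure_real_le hri hbi hle

theorem poisson_tail_mdp_general {h : ℝ≥0} {K : ℝ} (hh : 0 < h) (hK : 0 < K) {N : ι → ℝ≥0}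
    {a : ι → ℝ} (hN : ∀ᶠ i in l, 0 < N i) (ha : Tendsto a l atTop)
    (haN : Tendsto (fun i => a i / √(N i)) l (𝓝 0)) :
    Tendsto (fun i => 1 / a i ^ 2 *
      log (Po(h * N i).real {m : ℕ | K * a i * √(N i) < |(m : ℝ) - h * N i|})) l
      (𝓝 (-(K ^ 2 / (2 * h)))) := by
  have hq : 0 < √(h : ℝ) := sqrt_pos.2 hh
  have hsq : √(h : ℝ) ^ 2 = h := sq_sqrt h.coe_nonneg
  have hratio : Tendsto (fun i => K / √h * a i / √(h * N i : ℝ≥0)) l (𝓝 0) := by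
    convert haN.const_mul (K / h) using 1
    · ext i
      rw [NNReal.coe_mul, sqrt_mul h.coe_nonneg, ← hsq, sqrt_sq hq.le]
      field_simp
    · rw [mul_zero]
  convert! (tendsto_inv_sq_mul_log_poissonMeasure_real (hN.mono fun i hi => mul_pos hh hi)
    (ha.const_mul_atTop (by positivity : 0 < K / √h)) hratio).const_mul (K ^ 2 / h) using 1
  · ext i
    have hthreshold : K / √h * a i * √(h * N i : ℝ≥0) = K * a i * √(N i) := by
      rw [NNReal.coe_mul, sqrt_mul h.coe_nonneg]
      field_simp
    rw [hthreshold, mul_pow, div_pow, hsq, NNReal.coe_mul]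
    field_simp
  · ring_nf

end ModerateDeviations

/-- Moderate-deviation tail bound for Poisson random variables:
`limsup (1/a_n²)·log P(|Y_n − h n| > K a_n √n) ≤ −K²/(2h)` for `Y_n` Poisson of parameter `h n`. -/
theorem poisson_tail_mdp (h K : ℝ) (hh : 0 < h) (hK : 0 < K) (a : ℕ → ℝ)
    (ha_pos : ∀ n, 0 < a n)
    (ha_top : Tendsto a atTop atTop)
    (ha_sqrt : Tendsto (fun n : ℕ => a n / Real.sqrt n) atTop (nhds 0)) :
    Filter.limsup (fun n : ℕ =>
        (1 / (a n) ^ 2) * Real.log (∑' m : ℕ,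
          if K * a n * Real.sqrt n < |(m : ℝ) - h * n|
          then Real.exp (-(h * n)) * (h * n) ^ m / (Nat.factorial m) else 0))
      atTop ≤ -(K ^ 2 / (2 * h)) := by
  lift h to ℝ≥0 using hh.le
  have hn : ∀ᶠ n : ℕ in atTop, (0 : ℝ≥0) < n := (eventually_gt_atTop 0).mono fun n => Nat.cast_pos.2
  have key := poisson_tail_mdp_general (NNReal.coe_pos.1 hh) hK hn ha_top ha_sqrt
  simp only [poissonMeasure_real_eq_tsum, NNReal.coe_mul, NNReal.coe_natCast] at key
  exact key.limsup_eq.le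
end
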